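/- arXiv:1901.07740 — 4 statements merged into one kernel-verified Lean document; each statement's English description precedes it below -/
import Mathlib

section
/- Let n, m be natural numbers, let ℍ denote the real quaternions with quaternion unit i, let X₁ be an n×m matrix and X₂ an m×n matrix with quaternion entries. Then the following are equivalent: (a) for all u₀, v₀ ∈ ℍⁿ and all u₁, v₁ ∈ ℍ^m one has (star v₀)ᵗ (X₁ u₁) + (star v₁)ᵗ (i·(X₂ u₀)) = (star (X₁ v₁))ᵗ u₀ − (star (X₂ v₀))ᵗ (i·u₁); (b) X₂ = −i · X₁*, where X₁* is the quaternionic conjugate transpose of X₁ and star is quaternionic conjugation applied entrywise. -/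
open Matrix Quaternion
open scoped Quaternion

/-!
Writing `D` for the scalar matrix `i · Id_m`, condition (a) reads
`v₀* X₁ u₁ + v₁* D X₂ u₀ = v₁* X₁* u₀ - v₀* X₂* D u₁`. Evaluating at `v₀ = 0`, `u₁ = 0` and basis
vectors `v₁`, `u₀` gives `D X₂ = X₁*`, i.e. `X₂ = -D X₁*` since `D² = -1`. Conversely, from
`X₂ = -D X₁*` one gets `D X₂ = X₁*` and, as `D* = -D`, also `X₂* D = X₁ D² = -X₁`, so both pairs
of terms agree.
-/

/-- Characterization of the odd part of the Lie superalgebra attached to the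
dual pair `(U(n,ℍ), O*(m,ℍ))`: with `qi` the quaternion unit `i`, the
superalgebra condition (a) holds if and only if `X₂ = -i · X₁*`
(quaternionic conjugate transpose). -/
theorem odd_part_quaternionic_pair (n m : ℕ)
    (X₁ : Matrix (Fin n) (Fin m) ℍ[ℝ]) (X₂ : Matrix (Fin m) (Fin n) ℍ[ℝ])
    (qi : ℍ[ℝ]) (hqi : qi = ⟨0, 1, 0, 0⟩) :
    (∀ (u₀ v₀ : Fin n → ℍ[ℝ]) (u₁ v₁ : Fin m → ℍ[ℝ]),
        star v₀ ⬝ᵥ (X₁ *ᵥ u₁) + star v₁ ⬝ᵥ (fun j => qi * (X₂ *ᵥ u₀) j)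
          = star (X₁ *ᵥ v₁) ⬝ᵥ u₀ - star (X₂ *ᵥ v₀) ⬝ᵥ (fun j => qi * u₁ j))
      ↔ X₂ = Matrix.of fun j k => -(qi * star (X₁ k j)) := by
  have hre : qi.re = 0 := by rw [hqi]
  have hI : qi.imI = 1 := by rw [hqi]
  have hJ : qi.imJ = 0 := by rw [hqi]
  have hK : qi.imK = 0 := by rw [hqi]
  have hsq : qi * qi = -1 := by
    apply Quaternion.ext <;> simp [hre, hI, hJ, hK]
  have hstar : star qi = -qi := by
    apply Quaternion.ext <;> simp [hre]
  constructor
  · intro h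
    ext1 j k
    have h1 := h (Pi.single k 1) 0 0 (Pi.single j 1)
    have h2 : qi * X₂ j k = star (X₁ k j) := by
      simpa [← Pi.single_star] using h1
    rw [of_apply, ← h2, ← mul_assoc, hsq, neg_one_mul, neg_neg]
  · intro h u₀ v₀ u₁ v₁
    set D : Matrix (Fin m) (Fin m) ℍ[ℝ] := diagonal fun _ => qi with hD
    have hmul : ∀ w : Fin m → ℍ[ℝ], (fun j => qi * w j) = D *ᵥ w := by
      intro w; ext1 j; rw [hD, mulVec_diagonal]
    have hDX : D * X₂ = X₁ᴴ := by
      ext1 j k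
      rw [hD, diagonal_mul, h, of_apply, conjTranspose_apply, mul_neg, ← mul_assoc, hsq,
        neg_one_mul, neg_neg]
    have hXD : X₂ᴴ * D = -X₁ := by
      ext1 k j
      rw [hD, mul_diagonal, conjTranspose_apply, h, of_apply, star_neg, star_mul, star_star,
        hstar, mul_neg, neg_neg, mul_assoc, hsq, mul_neg_one, Matrix.neg_apply]
    rw [hmul, hmul, mulVec_mulVec, hDX, star_mulVec, star_mulVec, ← dotProduct_mulVec,
      ← dotProduct_mulVec, mulVec_mulVec, hXD, neg_mulVec, dotProduct_neg, sub_neg_eq_add, add_comm]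
end

section
/- Let W be a finite-dimensional real vector space, ⟨·,·⟩ a bilinear form on W with ⟨w,w⟩ = 0 for all w ∈ W, and J : W → W a linear map with J∘J = −id_W and ⟨Ju,v⟩ + ⟨u,Jv⟩ = 0 for all u,v ∈ W, such that β(u,v) := ⟨Ju,v⟩ is positive definite (β(u,u) > 0 for all u ≠ 0). Let g : W → W be a linear automorphism with ⟨gu,gv⟩ = ⟨u,v⟩ for all u,v ∈ W, and set J_g = −J∘(g − id_W). Then ker(J_g) ∩ range(J_g) = {0}; consequently J_g maps its image J_g(W) bijectively onto itself, i.e. the restriction of J_g to J_g(W) is well defined and invertible. -/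
/-! If `w` lies in both the kernel and the range of `Jg`, then `g w = w` and `J w = g u - u` for
some `u`, so `B (J w) w = B (g u) (g w) - B u w = 0` by invariance of `B` under `g`, and positivity
forces `w = 0`. Hence `Jg` is injective on its range, and comparing dimensions shows that it maps
the range onto itself. -/

/-- Let `W` be a finite-dimensional real symplectic space with compatible
positive complex structure `J` (so that `β(u,v) = B(Ju,v)` is positive
definite) and `g` a symplectic automorphism.  Then for `J_g = -J∘(g - id)`
one has `ker J_g ∩ range J_g = 0`, and consequently `J_g` maps its image
`J_g(W)` bijectively onto itself. -/
theorem Jg_invertible_on_image (W : Type*) [AddCommGroup W] [Module ℝ W]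
    [FiniteDimensional ℝ W]
    (B : W →ₗ[ℝ] W →ₗ[ℝ] ℝ) (halt : ∀ w, B w w = 0)
    (J : W →ₗ[ℝ] W) (hJ2 : J ∘ₗ J = -LinearMap.id)
    (hJsp : ∀ u v, B (J u) v + B u (J v) = 0)
    (hpos : ∀ u : W, u ≠ 0 → 0 < B (J u) u)
    (g : W ≃ₗ[ℝ] W) (hg : ∀ u v, B (g u) (g v) = B u v)
    (Jg : W →ₗ[ℝ] W)
    (hJg : Jg = -(J ∘ₗ ((g : W →ₗ[ℝ] W) - LinearMap.id))) :
    LinearMap.ker Jg ⊓ LinearMap.range Jg = ⊥ ∧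
      Submodule.map Jg (LinearMap.range Jg) = LinearMap.range Jg := by
  have hJJ : ∀ x, J (J x) = -x := fun x => by
    simpa using LinearMap.congr_fun hJ2 x
  have hbot : LinearMap.ker Jg ⊓ LinearMap.range Jg = ⊥ := by
    rw [Submodule.eq_bot_iff]
    rintro w ⟨hker, u, hu⟩
    have hker' : Jg w = 0 := hker
    rw [hJg] at hker' hu
    simp only [LinearMap.neg_apply, LinearMap.comp_apply, LinearMap.sub_apply,
      LinearEquiv.coe_coe, LinearMap.id_apply, neg_eq_zero] at hker' hu
    have hfix : g w = w := by
      have h := hJJ (g w - w)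
      rw [hker', map_zero] at h
      exact sub_eq_zero.mp (neg_eq_zero.mp h.symm)
    have hJw : J w = g u - u := by
      rw [← hu, map_neg, hJJ, neg_neg]
    by_contra hne
    have h := hpos w hne
    have hinv := hg u w
    rw [hfix] at hinv
    rw [hJw, map_sub, LinearMap.sub_apply, hinv, sub_self] at h
    exact lt_irrefl 0 h
  refine ⟨hbot, Submodule.eq_of_le_of_finrank_eq LinearMap.map_le_range ?_⟩
  have hinj : Function.Injective (Jg.domRestrict (LinearMap.range Jg)) := by
    rw [injective_iff_map_eq_zero]
    rintro ⟨x, hx⟩ h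
    have hmem : x ∈ LinearMap.ker Jg ⊓ LinearMap.range Jg := ⟨h, hx⟩
    rw [hbot, Submodule.mem_bot] at hmem
    exact Subtype.ext hmem
  rw [← LinearMap.range_domRestrict]
  exact LinearMap.finrank_range_of_inj hinj
end

section
/- Let a, b be integers with b ≤ 0 and a + b ≥ 2. Then for every real number y > 0: ∫_ℝ (1 + ix)^{−a} (1 − ix)^{−b} e^{−iπxy} dx = 0. (The integrand is integrable since |(1+ix)^{−a}(1−ix)^{−b}| = (1+x²)^{−(a+b)/2} ≤ (1+x²)^{−1}.) -/
/-!
The integrand extends to the function `F z = (1 + iz)^{-a} (1 - iz)^{-b} e^{-iπzy}`, whose only pole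
`z = i` lies in the upper half-plane. On the closed lower half-plane `|1 - iz| ≤ |1 + iz|`,
`1 ≤ |1 + iz|` and `|e^{-iπzy}| ≤ 1`, so `|F z| ≤ |1 + iz|⁻²` (`norm_extension_le`). Cauchy's theorem
on the rectangle `[-R, R] × [-R, 0]` expresses the integral over `[-R, R]` through the three other
sides, of total length `4R`, on which `|F| ≤ R⁻²`. Hence that integral is at most `4 / R`
(`norm_integral_segment_le`), and `R → ∞` gives the result.
-/

open MeasureTheory

namespace FourierVanishing

/-- The extension of the integrand to complex `z`. -/
noncomputable def extension (a b : ℤ) (y : ℝ) (z : ℂ) : ℂ :=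
  ((1 : ℂ) + z * Complex.I) ^ (-a) * ((1 : ℂ) - z * Complex.I) ^ (-b) *
    Complex.exp (-(Complex.I * Real.pi * z * y))

lemma sq_norm_one_add (z : ℂ) : ‖(1 : ℂ) + z * Complex.I‖ ^ 2 = (1 - z.im) ^ 2 + z.re ^ 2 := by
  rw [Complex.sq_norm, Complex.normSq_apply]
  simp
  ring

lemma sq_norm_one_sub (z : ℂ) : ‖(1 : ℂ) - z * Complex.I‖ ^ 2 = (1 + z.im) ^ 2 + z.re ^ 2 := by
  rw [Complex.sq_norm, Complex.normSq_apply]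
  simp
  ring

lemma one_le_norm_one_add {z : ℂ} (hz : z.im ≤ 0) : 1 ≤ ‖(1 : ℂ) + z * Complex.I‖ := by
  have h := sq_norm_one_add z
  have h0 := norm_nonneg ((1 : ℂ) + z * Complex.I)
  nlinarith [sq_nonneg z.re]

lemma one_add_ne_zero {z : ℂ} (hz : z.im ≤ 0) : (1 : ℂ) + z * Complex.I ≠ 0 :=
  norm_pos_iff.mp (one_pos.trans_le (one_le_norm_one_add hz))

lemma norm_extension_le {a b : ℤ} (hb : b ≤ 0) (hab : 2 ≤ a + b) {y : ℝ} (hy : 0 < y)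
    {z : ℂ} (hz : z.im ≤ 0) :
    ‖extension a b y z‖ ≤ ((1 - z.im) ^ 2 + z.re ^ 2)⁻¹ := by
  obtain ⟨n, rfl⟩ : ∃ n : ℕ, b = -n := ⟨b.natAbs, by omega⟩
  have hw1 := one_le_norm_one_add hz
  have hw0 : ‖(1 : ℂ) + z * Complex.I‖ ≠ 0 := (one_pos.trans_le hw1).ne'
  have hle : ‖(1 : ℂ) - z * Complex.I‖ ≤ ‖(1 : ℂ) + z * Complex.I‖ := by
    refine (sq_le_sq₀ (norm_nonneg _) (norm_nonneg _)).mp ?_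
    rw [sq_norm_one_sub, sq_norm_one_add]
    nlinarith
  have hexp : ‖Complex.exp (-(Complex.I * Real.pi * z * y))‖ ≤ 1 := by
    rw [Complex.norm_exp, Real.exp_le_one_iff]
    have : (-(Complex.I * Real.pi * z * y)).re = Real.pi * y * z.im := by
      simp
      ring
    rw [this]
    exact mul_nonpos_of_nonneg_of_nonpos (by positivity) hz
  rw [extension, norm_mul, norm_mul, norm_zpow, neg_neg, zpow_natCast, norm_pow,
    ← sq_norm_one_add]
  calc _ ≤ ‖(1 : ℂ) + z * Complex.I‖ ^ (-a) * ‖(1 : ℂ) + z * Complex.I‖ ^ n * 1 := by gcongr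
    _ = ‖(1 : ℂ) + z * Complex.I‖ ^ (-a + n) := by
      rw [mul_one, zpow_add₀ hw0, zpow_natCast]
    _ ≤ ‖(1 : ℂ) + z * Complex.I‖ ^ (-2 : ℤ) := zpow_le_zpow_right₀ hw1 (by omega)
    _ = _ := by rw [zpow_neg]; norm_cast

lemma differentiableAt_extension {a b : ℤ} (hb : b ≤ 0) (y : ℝ) {z : ℂ} (hz : z.im ≤ 0) :
    DifferentiableAt ℂ (extension a b y) z := by
  unfold extension
  refine DifferentiableAt.mul (DifferentiableAt.mul ?_ ?_) (by fun_prop)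
  · exact DifferentiableAt.zpow (by fun_prop) (Or.inl (one_add_ne_zero hz))
  · exact DifferentiableAt.zpow (by fun_prop) (Or.inr (by omega))

lemma norm_integral_segment_le {a b : ℤ} (hb : b ≤ 0) (hab : 2 ≤ a + b) {y : ℝ} (hy : 0 < y)
    {R : ℝ} (hR : 0 < R) :
    ‖∫ x in (-R)..R, extension a b y x‖ ≤ 4 / R := by
  have hC := Complex.integral_boundary_rect_eq_zero_of_differentiableOn (extension a b y)
    (⟨-R, -R⟩ : ℂ) (⟨R, 0⟩ : ℂ) (by
      intro z hz
      refine (differentiableAt_extension hb y ?_).differentiableWithinAt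
      have := hz.2
      simp only [Set.mem_preimage, Set.uIcc_of_le (neg_nonpos.mpr hR.le)] at this
      exact this.2)
  simp only [Complex.ofReal_zero, zero_mul, add_zero] at hC
  have hbot : ‖∫ x in (-R)..R, extension a b y (x + (-R : ℝ) * Complex.I)‖
      ≤ (R ^ 2)⁻¹ * |R - -R| := by
    refine intervalIntegral.norm_integral_le_of_norm_le_const fun x _ => ?_
    refine (norm_extension_le hb hab hy (by simp [hR.le])).trans ?_
    gcongr
    simp
    nlinarith [sq_nonneg x]
  have hside : ∀ s : ℝ, s ^ 2 = R ^ 2 →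
      ‖∫ t in (-R)..0, extension a b y (s + t * Complex.I)‖ ≤ (R ^ 2)⁻¹ * |0 - -R| := by
    intro s hs
    refine intervalIntegral.norm_integral_le_of_norm_le_const fun t ht => ?_
    rw [Set.uIoc_of_le (by linarith)] at ht
    refine (norm_extension_le hb hab hy (by simpa using ht.2)).trans ?_
    gcongr
    simp
    nlinarith [sq_nonneg (1 - t)]
  have hr := hside R rfl
  have hl := hside (-R) (by ring)
  have hEq : ∫ x in (-R)..R, extension a b y x =
      (∫ x in (-R)..R, extension a b y (x + (-R : ℝ) * Complex.I)) +
      Complex.I • (∫ t in (-R)..0, extension a b y (R + t * Complex.I)) -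
      Complex.I • (∫ t in (-R)..0, extension a b y ((-R : ℝ) + t * Complex.I)) := by
    linear_combination -hC
  rw [hEq]
  refine (norm_sub_le _ _).trans ((add_le_add_left (norm_add_le _ _) _).trans ?_)
  rw [norm_smul, norm_smul, Complex.norm_I, one_mul, one_mul]
  refine (add_le_add (add_le_add hbot hr) hl).trans_eq ?_
  rw [abs_of_pos (by linarith), abs_of_pos (by linarith)]
  field_simp
  ring

lemma integrable_extension {a b : ℤ} (hb : b ≤ 0) (hab : 2 ≤ a + b) {y : ℝ} (hy : 0 < y) :
    Integrable fun x : ℝ => extension a b y x := by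
  have hcont : Continuous fun x : ℝ => extension a b y x := by
    refine continuous_iff_continuousAt.mpr fun x => ?_
    exact (differentiableAt_extension (z := x) hb y (by simp)).continuousAt.comp
      Complex.continuous_ofReal.continuousAt
  refine integrable_inv_one_add_sq.mono' hcont.aestronglyMeasurable (ae_of_all _ fun x => ?_)
  simpa using norm_extension_le (z := x) hb hab hy (by simp)

end FourierVanishing

/-- Vanishing of the one-variable Fourier transform underlying the support
computations: for integers `b ≤ 0` and `a + b ≥ 2`, the integral
`∫_ℝ (1+ix)^{-a} (1-ix)^{-b} e^{-iπxy} dx` vanishes for every `y > 0`. -/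
theorem fourier_vanishes_pos (a b : ℤ) (hb : b ≤ 0) (hab : 2 ≤ a + b)
    (y : ℝ) (hy : 0 < y) :
    ∫ x : ℝ,
        ((1 : ℂ) + x * Complex.I) ^ (-a) * ((1 : ℂ) - x * Complex.I) ^ (-b) *
          Complex.exp (-(Complex.I * Real.pi * x * y)) = 0 := by
  change ∫ x : ℝ, FourierVanishing.extension a b y x = 0
  refine tendsto_nhds_unique (intervalIntegral_tendsto_integral
    (FourierVanishing.integrable_extension hb hab hy)
    Filter.tendsto_neg_atTop_atBot Filter.tendsto_id) ?_
  refine squeeze_zero_norm' ?_ (Filter.Tendsto.const_div_atTop Filter.tendsto_id (4 : ℝ))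
  filter_upwards [Filter.eventually_gt_atTop 0] with R hR
  exact FourierVanishing.norm_integral_segment_le hb hab hy hR
end

section
/- Let a, b be integers with a ≤ 0 and a + b ≥ 2. Then for every real number y < 0: ∫_ℝ (1 + ix)^{−a} (1 − ix)^{−b} e^{−iπxy} dx = 0. (The integrand is integrable since |(1+ix)^{−a}(1−ix)^{−b}| = (1+x²)^{−(a+b)/2} ≤ (1+x²)^{−1}.) -/
open MeasureTheory

/-!
The integrand extends to `f z = (1 + iz)^{-a} (1 - iz)^{-b} e^{-iπzy}`, whose only possible pole
`z = -i` lies in the open lower half-plane. For `Im z ≥ 0` one has `|1 + iz| ≤ |1 - iz|`,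
`1 ≤ |1 - iz|` and `|e^{-iπzy}| ≤ 1` (as `y < 0`), so `a ≤ 0` and `a + b ≥ 2` give
`|f z| ≤ |1 - iz|^{-2}` (`FourierVanish.norm_ext_le`). By the Cauchy-Goursat theorem on the
rectangle with vertices `±R`, `±R + iR`, the integral over `[-R, R]` is a sum of integrals over
three sides of total length `4R` on which `|f| ≤ R^{-2}`; hence it is at most `4 / R`, which tends
to `0`.
-/

namespace FourierVanish

/-- The extension of the integrand to a function of a complex variable. -/
noncomputable def ext (a b : ℤ) (y : ℝ) (z : ℂ) : ℂ :=
  ((1 : ℂ) + z * Complex.I) ^ (-a) * ((1 : ℂ) - z * Complex.I) ^ (-b) *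
    Complex.exp (-(Complex.I * Real.pi * z * y))

lemma normSq_one_sub (z : ℂ) : ‖1 - z * Complex.I‖ ^ 2 = (1 + z.im) ^ 2 + z.re ^ 2 := by
  rw [← Complex.normSq_eq_norm_sq, Complex.normSq_apply]
  simp
  ring

lemma normSq_one_add (z : ℂ) : ‖1 + z * Complex.I‖ ^ 2 = (1 - z.im) ^ 2 + z.re ^ 2 := by
  rw [← Complex.normSq_eq_norm_sq, Complex.normSq_apply]
  simp
  ring

lemma one_le_norm {z : ℂ} (hz : 0 ≤ z.im) : 1 ≤ ‖1 - z * Complex.I‖ := by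
  have := normSq_one_sub z
  have := norm_nonneg (1 - z * Complex.I)
  nlinarith [sq_nonneg z.re]

lemma norm_ext_le {a b : ℤ} (ha : a ≤ 0) (hab : 2 ≤ a + b) {y : ℝ} (hy : y < 0) {z : ℂ}
    (hz : 0 ≤ z.im) : ‖ext a b y z‖ ≤ ((1 + z.im) ^ 2 + z.re ^ 2)⁻¹ := by
  have h1 := one_le_norm hz
  have h0 : 0 < ‖1 - z * Complex.I‖ := by linarith
  have hle : ‖1 + z * Complex.I‖ ≤ ‖1 - z * Complex.I‖ := by
    refine le_of_sq_le_sq ?_ h0.le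
    rw [normSq_one_add, normSq_one_sub]
    nlinarith
  have hexp : ‖Complex.exp (-(Complex.I * Real.pi * z * y))‖ ≤ 1 := by
    rw [Complex.norm_exp, Real.exp_le_one_iff]
    have : (-(Complex.I * Real.pi * z * y)).re = Real.pi * z.im * y := by simp
    rw [this]
    exact mul_nonpos_of_nonneg_of_nonpos (mul_nonneg Real.pi_pos.le hz) hy.le
  rw [ext, norm_mul, norm_mul, norm_zpow, norm_zpow, ← normSq_one_sub]
  calc _ ≤ ‖1 - z * Complex.I‖ ^ (-a) * ‖1 - z * Complex.I‖ ^ (-b) * 1 := by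
        gcongr
        exact zpow_le_zpow_left₀ (by omega) (norm_nonneg _) hle
    _ = ‖1 - z * Complex.I‖ ^ (-a + -b) := by rw [mul_one, zpow_add₀ h0.ne']
    _ ≤ ‖1 - z * Complex.I‖ ^ (-2 : ℤ) := zpow_le_zpow_right₀ h1 (by omega)
    _ = _ := by rw [zpow_neg]; norm_cast

lemma differentiableAt_ext {a b : ℤ} (ha : a ≤ 0) (y : ℝ) {z : ℂ} (hz : 0 ≤ z.im) :
    DifferentiableAt ℂ (ext a b y) z := by
  have h0 : 1 - z * Complex.I ≠ 0 := norm_pos_iff.1 (by linarith [one_le_norm hz])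
  have e1 : DifferentiableAt ℂ (fun z : ℂ => (1 + z * Complex.I) ^ (-a)) z :=
    DifferentiableAt.zpow (by fun_prop) (Or.inr (by omega))
  have e2 : DifferentiableAt ℂ (fun z : ℂ => (1 - z * Complex.I) ^ (-b)) z :=
    DifferentiableAt.zpow (by fun_prop) (Or.inl h0)
  exact (e1.mul e2).mul (by fun_prop)

lemma integrable_ext {a b : ℤ} (ha : a ≤ 0) (hab : 2 ≤ a + b) {y : ℝ} (hy : y < 0) :
    Integrable (fun x : ℝ => ext a b y x) := by
  refine integrable_inv_one_add_sq.mono' (Continuous.aestronglyMeasurable ?_)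
    (Filter.Eventually.of_forall fun x => ?_)
  · refine continuous_iff_continuousAt.2 fun x => ?_
    exact ContinuousAt.comp (f := fun x : ℝ => (x : ℂ))
      (differentiableAt_ext ha y (by simp)).continuousAt Complex.continuous_ofReal.continuousAt
  · simpa using norm_ext_le ha hab hy (z := (x : ℂ)) (by simp)

lemma norm_integral_le {a b : ℤ} (ha : a ≤ 0) (hab : 2 ≤ a + b) {y : ℝ} (hy : y < 0) {R : ℝ}
    (hR : 0 < R) : ‖∫ x in (-R)..R, ext a b y x‖ ≤ 4 / R := by
  have key := Complex.integral_boundary_rect_eq_zero_of_differentiableOn (ext a b y)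
    ⟨-R, 0⟩ ⟨R, R⟩ (fun z hz => by
      refine (differentiableAt_ext ha y ?_).differentiableWithinAt
      have := hz.2
      simp only [Set.mem_preimage, Set.uIcc_of_le hR.le] at this
      exact this.1)
  simp only [Complex.ofReal_zero, zero_mul, add_zero] at key
  -- On the three sides other than the real one, `R ≤ |1 - iz|`.
  have far : ∀ z : ℂ, 0 ≤ z.im → R ^ 2 ≤ (1 + z.im) ^ 2 + z.re ^ 2 →
      ‖ext a b y z‖ ≤ (R ^ 2)⁻¹ := fun z hz h =>
    (norm_ext_le ha hab hy hz).trans (inv_anti₀ (by positivity) h)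
  have top : ‖∫ x in (-R)..R, ext a b y (x + R * Complex.I)‖ ≤ (R ^ 2)⁻¹ * |R - -R| := by
    refine intervalIntegral.norm_integral_le_of_norm_le_const fun x _ => far _ ?_ ?_
    · simpa using hR.le
    · simp only [Complex.add_re, Complex.add_im, Complex.mul_re, Complex.mul_im,
        Complex.ofReal_re, Complex.ofReal_im, Complex.I_re, Complex.I_im]
      nlinarith [sq_nonneg x]
  have side : ∀ s : ℝ, s ^ 2 = R ^ 2 →
      ‖∫ t in (0 : ℝ)..R, ext a b y (s + t * Complex.I)‖ ≤ (R ^ 2)⁻¹ * |R - 0| := by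
    intro s hs
    refine intervalIntegral.norm_integral_le_of_norm_le_const fun t ht => ?_
    rw [Set.uIoc_of_le hR.le] at ht
    refine far _ ?_ ?_
    · simpa using ht.1.le
    · simp only [Complex.add_re, Complex.add_im, Complex.mul_re, Complex.mul_im,
        Complex.ofReal_re, Complex.ofReal_im, Complex.I_re, Complex.I_im]
      nlinarith [sq_nonneg (1 + t)]
  have right := side R rfl
  have left := side (-R) (by ring)
  set A := ∫ x in (-R)..R, ext a b y x
  set B := ∫ x in (-R)..R, ext a b y (x + R * Complex.I)
  set C := ∫ t in (0 : ℝ)..R, ext a b y (R + t * Complex.I)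
  set D := ∫ t in (0 : ℝ)..R, ext a b y ((-R : ℝ) + t * Complex.I)
  have hA : A = B - Complex.I • C + Complex.I • D := by linear_combination key
  have hn : ‖A‖ ≤ ‖B‖ + ‖C‖ + ‖D‖ := by
    rw [hA]
    refine (norm_add_le _ _).trans ?_
    refine (add_le_add_left (norm_sub_le _ _) _).trans ?_
    simp
  rw [abs_of_pos (by linarith)] at top right left
  have : (4 : ℝ) / R = (R ^ 2)⁻¹ * (R - -R) + (R ^ 2)⁻¹ * (R - 0) + (R ^ 2)⁻¹ * (R - 0) := by
    field_simp
    ring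
  linarith

end FourierVanish

/-- Vanishing of the one-variable Fourier transform underlying the support
computations: for integers `a ≤ 0` and `a + b ≥ 2`, the integral
`∫_ℝ (1+ix)^{-a} (1-ix)^{-b} e^{-iπxy} dx` vanishes for every `y < 0`. -/
theorem fourier_vanishes_neg (a b : ℤ) (ha : a ≤ 0) (hab : 2 ≤ a + b)
    (y : ℝ) (hy : y < 0) :
    ∫ x : ℝ,
        ((1 : ℂ) + x * Complex.I) ^ (-a) * ((1 : ℂ) - x * Complex.I) ^ (-b) *
          Complex.exp (-(Complex.I * Real.pi * x * y)) = 0 := by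
  change ∫ x : ℝ, FourierVanish.ext a b y x = 0
  have h1 := intervalIntegral_tendsto_integral (FourierVanish.integrable_ext ha hab hy)
    Filter.tendsto_neg_atTop_atBot Filter.tendsto_id
  refine tendsto_nhds_unique h1 (squeeze_zero_norm' ?_
    (tendsto_const_nhds.div_atTop Filter.tendsto_id : Filter.Tendsto (fun R : ℝ => 4 / R) _ _))
  filter_upwards [Filter.eventually_gt_atTop 0] with R hR
  exact FourierVanish.norm_integral_le ha hab hy hR
end
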